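/- arXiv:2603.00815 — 2 statements merged into one kernel-verified Lean document; each statement's English description precedes it below -/
import Mathlib

section
/- Let n ≥ 1 and let r, p : ℝ^n → [1,∞) be measurable exponents with p⁻ > 1 and r⁻ < ∞, and let q(x) = p(x)/(p(x)−1) be the pointwise conjugate of p, so that q⁺ = p⁻/(p⁻−1) < ∞. Suppose that the constant function 1 belongs to L^{s(·)}(ℝ^n), where the exponent s is defined by 1/s(x) := max{1/p⁻ − 1/p(x), 0} for all x ∈ ℝ^n. Then there exists a constant C > 0 such that for every k ∈ L^{q⁺}(ℝ^n) ∩ L^{r⁻}(ℝ^n) and every f ∈ L^{p(·)}(ℝ^n) ∩ L^1(ℝ^n), ‖k * f‖_{L^{r(·)}(ℝ^n)} ≤ C ‖k‖_{L^{q⁺}(ℝ^n)∩L^{r⁻}(ℝ^n)} · ‖f‖_{L^{p(·)}(ℝ^n)∩L^1(ℝ^n)}. -/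
/-!
Rescale so that all norms of `k` and `f` are at most `1`, write `m = p⁻`, and choose `λ ≥ 1` with
`∫ λ^{-s(x)} dx ≤ 1`. Since `1 / m = 1 / p + 1 / s`, Young's inequality `(ab)ᵐ ≤ aᵖ + bˢ` with
`b = 1 / λ` embeds `L^{p(·)}` into `Lᵐ`, so Hölder's inequality bounds `k * f` uniformly by `2λ`.
After division by `2λ` the convolution takes values in `[-1, 1]`, where lowering the exponent from
`r(x)` to `r⁻` only enlarges the modular, and Young's convolution inequality `L^{r⁻} * L¹ ⊆ L^{r⁻}`
bounds the result by `1`.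
-/

open MeasureTheory Filter Real
open scoped ENNReal

noncomputable section

/-- Euclidean space `ℝⁿ`. -/
abbrev Esp (n : ℕ) := EuclideanSpace ℝ (Fin n)

/-- The variable exponent modular `ρ_{p(·)}(f) = ∫_{ℝⁿ} |f(x)|^{p(x)} dx`. -/
def vMod (n : ℕ) (p : Esp n → ℝ) (f : Esp n → ℝ) : ℝ≥0∞ :=
  ∫⁻ x, (ENNReal.ofReal |f x|) ^ (p x) ∂volume

/-- The Luxemburg norm `‖f‖_{L^{p(·)}} = inf {λ > 0 : ρ_{p(·)}(f/λ) ≤ 1}`. -/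
def luxNorm (n : ℕ) (p : Esp n → ℝ) (f : Esp n → ℝ) : ℝ :=
  sInf {lam : ℝ | 0 < lam ∧ vMod n p (fun x => f x / lam) ≤ 1}

/-- Membership in the variable exponent Lebesgue space `L^{p(·)}(ℝⁿ)`. -/
def MemVLp (n : ℕ) (p : Esp n → ℝ) (f : Esp n → ℝ) : Prop :=
  AEMeasurable f volume ∧ ∃ lam : ℝ, 0 < lam ∧ vMod n p (fun x => f x / lam) ≤ 1

/-- Global log-Hölder continuity of `1/p` with decay value `l` (representing `l = 1/p_∞`). -/
def IsLogHolder (n : ℕ) (p : Esp n → ℝ) (l : ℝ) : Prop :=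
  ∃ c : ℝ, 0 < c ∧
    (∀ x y : Esp n, |1 / p x - 1 / p y| ≤ c / Real.log (Real.exp 1 + 1 / ‖x - y‖)) ∧
    (∀ x : Esp n, |1 / p x - l| ≤ c / Real.log (Real.exp 1 + ‖x‖))

/-- The kernel `η_{t,m}(x) = t^{-n} (1 + |x|/t)^{-m}`. -/
def etaKer (n : ℕ) (t m : ℝ) (x : Esp n) : ℝ :=
  t ^ (-(n : ℝ)) * (1 + ‖x‖ / t) ^ (-m)

/-- Convolution `(u * v)(x) = ∫ u(x - y) v(y) dy`. -/
def convR (n : ℕ) (u v : Esp n → ℝ) (x : Esp n) : ℝ :=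
  ∫ y, u (x - y) * v y ∂volume

namespace VariableExponent

section Modular

variable {α : Type*} {mα : MeasurableSpace α} {μ : Measure α} {p f g : α → ℝ} {c : ℝ}

/-- The variable exponent modular `∫ |f|^p dμ` over an arbitrary measure space. For Lebesgue measure
on `ℝⁿ` it unfolds to `vMod`. -/
def modular (μ : Measure α) (p f : α → ℝ) : ℝ≥0∞ :=
  ∫⁻ x, ENNReal.ofReal |f x| ^ p x ∂μ

/-- The Luxemburg norm associated with `modular`, with the junk value `0` outside of the variable
exponent space. For Lebesgue measure on `ℝⁿ` it unfolds to `luxNorm`. -/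
def luxemburgNorm (μ : Measure α) (p f : α → ℝ) : ℝ :=
  sInf {c : ℝ | 0 < c ∧ modular μ p (fun x => f x / c) ≤ 1}

/-- Membership in the variable exponent Lebesgue space of an arbitrary measure space. For Lebesgue
measure on `ℝⁿ` it unfolds to `MemVLp`. -/
def MemVariableLp (μ : Measure α) (p f : α → ℝ) : Prop :=
  AEMeasurable f μ ∧ ∃ c : ℝ, 0 < c ∧ modular μ p (fun x => f x / c) ≤ 1

lemma modular_mono (hp : ∀ᵐ x ∂μ, 0 ≤ p x) (hfg : ∀ᵐ x ∂μ, |f x| ≤ |g x|) :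
    modular μ p f ≤ modular μ p g := by
  refine lintegral_mono_ae ?_
  filter_upwards [hp, hfg] with x hpx hx
  exact ENNReal.rpow_le_rpow (ENNReal.ofReal_le_ofReal hx) hpx

lemma luxemburgNorm_nonneg : 0 ≤ luxemburgNorm μ p f :=
  Real.sInf_nonneg fun _ hc => hc.1.le

lemma luxemburgNorm_le (hc : 0 < c) (h : modular μ p (fun x => f x / c) ≤ 1) :
    luxemburgNorm μ p f ≤ c :=
  csInf_le ⟨0, fun _ h => h.1.le⟩ ⟨hc, h⟩

lemma MemVariableLp.modular_div_le_one (hf : MemVariableLp μ p f) (hp : ∀ᵐ x ∂μ, 0 ≤ p x)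
    (h : luxemburgNorm μ p f < c) : modular μ p (fun x => f x / c) ≤ 1 := by
  obtain ⟨d, ⟨hd, hfd⟩, hdc⟩ := exists_lt_of_csInf_lt hf.2 h
  refine (modular_mono hp (.of_forall fun x => ?_)).trans hfd
  rw [abs_div, abs_div, abs_of_pos hd, abs_of_pos (hd.trans hdc)]
  gcongr

end Modular

section EssInf

lemma isCoboundedUnder_ge_of_countableInterFilter {ι : Type*} (l : Filter ι) [l.NeBot]
    [CountableInterFilter l] (u : ι → ℝ) : l.IsCoboundedUnder (· ≥ ·) u := by
  obtain ⟨N, hN⟩ : ∃ N : ℕ, ∃ᶠ x in l, u x ≤ N := by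
    by_contra! h
    obtain ⟨x, hx⟩ := (eventually_countable_forall.2 h).exists
    obtain ⟨N, hN⟩ := exists_nat_ge (u x)
    exact (hx N).not_ge hN
  exact .of_frequently_le hN

variable {α : Type*} {mα : MeasurableSpace α} {μ : Measure α} {p : α → ℝ} {c : ℝ}

lemma ae_essInf_le_of_ae_le (hp : ∀ᵐ x ∂μ, c ≤ p x) : ∀ᵐ x ∂μ, essInf p μ ≤ p x :=
  ae_essInf_le (isBoundedUnder_of_eventually_ge hp)

lemma le_essInf_of_ae_le_real [NeZero μ] (hp : ∀ᵐ x ∂μ, c ≤ p x) : c ≤ essInf p μ :=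
  le_essInf_of_ae_le c hp (isCoboundedUnder_ge_of_countableInterFilter _ p)

end EssInf

section Integrals

lemma mul_rpow_le_rpow_add_rpow (a b : ℝ≥0∞) {m p : ℝ} (hm : 0 < m) (hmp : m < p) :
    (a * b) ^ m ≤ a ^ p + b ^ (1 / m - 1 / p)⁻¹ := by
  have hp : 0 < p := hm.trans hmp
  have hpm : 0 < p - m := sub_pos.2 hmp
  have hconj : (p / m).HolderConjugate (p / (p - m)) := by
    rw [Real.holderConjugate_iff, one_lt_div hm]
    exact ⟨hmp, by field_simp; ring⟩
  have div_le_self (u : ℝ≥0∞) {t : ℝ} (ht : 1 < t) : u / ENNReal.ofReal t ≤ u :=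
    ENNReal.div_le_of_le_mul (le_mul_of_one_le_right' (ENNReal.one_le_ofReal.2 ht.le))
  calc (a * b) ^ m = a ^ m * b ^ m := ENNReal.mul_rpow_of_nonneg _ _ hm.le
    _ ≤ (a ^ m) ^ (p / m) / ENNReal.ofReal (p / m) +
        (b ^ m) ^ (p / (p - m)) / ENNReal.ofReal (p / (p - m)) :=
      ENNReal.young_inequality _ _ hconj
    _ ≤ (a ^ m) ^ (p / m) + (b ^ m) ^ (p / (p - m)) :=
      add_le_add (div_le_self _ hconj.lt) (div_le_self _ hconj.symm.lt)
    _ = a ^ p + b ^ (1 / m - 1 / p)⁻¹ := by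
      rw [← ENNReal.rpow_mul, ← ENNReal.rpow_mul]
      congr 2 <;> field_simp

variable {α : Type*} {mα : MeasurableSpace α} {μ : Measure α} {p : α → ℝ} {m : ℝ}
  {F w : α → ℝ≥0∞} {L : ℝ≥0∞}

lemma lintegral_mul_const_rpow_le (hp : AEMeasurable p μ) (hm : 0 < m)
    (hmp : ∀ᵐ x ∂μ, m ≤ p x) (hF : AEMeasurable F μ) (hL : L ≤ 1) :
    ∫⁻ x, (F x * L) ^ m ∂μ ≤
      ∫⁻ x, F x ^ p x ∂μ + ∫⁻ x in {x | m < p x}, L ^ (1 / m - 1 / p x)⁻¹ ∂μ := by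
  rw [← lintegral_indicator₀ (nullMeasurableSet_lt aemeasurable_const hp),
    ← lintegral_add_left' (hF.pow hp)]
  refine lintegral_mono_ae ?_
  filter_upwards [hmp] with x hx
  rcases hx.eq_or_lt with heq | hlt
  · calc (F x * L) ^ m ≤ F x ^ m := ENNReal.rpow_le_rpow (mul_le_of_le_one_right' hL) hm.le
      _ = F x ^ p x := by rw [heq]
      _ ≤ _ := le_self_add
  · rw [Set.indicator_of_mem (by exact hlt)]
    exact mul_rpow_le_rpow_add_rpow _ _ hm hlt

lemma lintegral_rpow_le_lintegral_rpow_of_le_one (hmp : ∀ᵐ x ∂μ, m ≤ p x) (hF : ∀ x, F x ≤ 1) :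
    ∫⁻ x, F x ^ p x ∂μ ≤ ∫⁻ x, F x ^ m ∂μ :=
  lintegral_mono_ae <| hmp.mono fun x hx => ENNReal.rpow_le_rpow_of_exponent_ge (hF x) hx

lemma rpow_lintegral_mul_le (hF : AEMeasurable F μ) (hw : AEMeasurable w μ)
    (hm : 1 ≤ m) :
    (∫⁻ x, F x * w x ∂μ) ^ m ≤ (∫⁻ x, F x ^ m * w x ∂μ) * (∫⁻ x, w x ∂μ) ^ (m - 1) := by
  have hm0 : 0 < m := one_pos.trans_le hm
  have hinv : 0 ≤ 1 - m⁻¹ := sub_nonneg.2 (inv_le_one_of_one_le₀ hm)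
  have hpt (x : α) : F x * w x = (F x ^ m * w x) ^ m⁻¹ * w x ^ (1 - m⁻¹) := by
    rw [ENNReal.mul_rpow_of_nonneg _ _ (inv_nonneg.2 hm0.le), ENNReal.rpow_rpow_inv hm0.ne',
      mul_assoc, ← ENNReal.rpow_add_of_nonneg _ _ (inv_nonneg.2 hm0.le) hinv,
      add_sub_cancel, ENNReal.rpow_one]
  calc (∫⁻ x, F x * w x ∂μ) ^ m
      = (∫⁻ x, (F x ^ m * w x) ^ m⁻¹ * w x ^ (1 - m⁻¹) ∂μ) ^ m := by simp only [← hpt]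
    _ ≤ ((∫⁻ x, F x ^ m * w x ∂μ) ^ m⁻¹ * (∫⁻ x, w x ∂μ) ^ (1 - m⁻¹)) ^ m := by
      gcongr
      exact ENNReal.lintegral_mul_norm_pow_le ((hF.pow_const m).mul hw) hw
        (inv_nonneg.2 hm0.le) hinv (add_sub_cancel _ _)
    _ = (∫⁻ x, F x ^ m * w x ∂μ) * (∫⁻ x, w x ∂μ) ^ (m - 1) := by
      rw [ENNReal.mul_rpow_of_nonneg _ _ hm0.le, ENNReal.rpow_inv_rpow hm0.ne', ← ENNReal.rpow_mul]
      congr 2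
      field_simp

lemma ofReal_abs_integral_mul_le (f g : α → ℝ) :
    ENNReal.ofReal |∫ x, f x * g x ∂μ| ≤
      ∫⁻ x, ENNReal.ofReal |f x| * ENNReal.ofReal |g x| ∂μ := by
  simpa only [← Real.enorm_eq_ofReal_abs, enorm_mul] using
    enorm_integral_le_lintegral_enorm (μ := μ) fun x => f x * g x

end Integrals

section Convolution

variable {G : Type*} {mG : MeasurableSpace G} [AddGroup G] [MeasurableAdd₂ G] [MeasurableNeg G]
  {μ : Measure G} [μ.IsAddLeftInvariant] [μ.IsNegInvariant]

lemma isAddRightInvariant_of_isNegInvariant (μ : Measure G) [μ.IsAddLeftInvariant]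
    [μ.IsNegInvariant] : μ.IsAddRightInvariant where
  map_add_right_eq_self g := by
    have h : (fun x : G => x + g) = Neg.neg ∘ (fun x => -g + x) ∘ Neg.neg := by
      ext x
      simp
    rw [h]
    exact ((Measure.measurePreserving_neg μ).comp
      ((measurePreserving_add_left μ (-g)).comp (Measure.measurePreserving_neg μ))).map_eq

variable [SFinite μ] {K F : G → ℝ≥0∞} {p r k f : G → ℝ} {m q ρ lam : ℝ}

lemma lintegral_rpow_lintegral_sub_mul_le (hK : AEMeasurable K μ) (hF : AEMeasurable F μ)
    (hρ : 1 ≤ ρ) :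
    ∫⁻ x, (∫⁻ y, K (x - y) * F y ∂μ) ^ ρ ∂μ ≤ (∫⁻ x, K x ^ ρ ∂μ) * (∫⁻ y, F y ∂μ) ^ ρ := by
  have : μ.IsAddRightInvariant := isAddRightInvariant_of_isNegInvariant μ
  have hKsub : AEMeasurable (fun z : G × G => K (z.1 - z.2)) (μ.prod μ) :=
    hK.comp_quasiMeasurePreserving (quasiMeasurePreserving_sub μ μ)
  have hKleft (x : G) : AEMeasurable (fun y => K (x - y)) μ :=
    hK.comp_quasiMeasurePreserving (quasiMeasurePreserving_sub_left μ x)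
  have hKright (y : G) : AEMeasurable (fun x => K (x - y)) μ :=
    hK.comp_quasiMeasurePreserving (measurePreserving_sub_right μ y).quasiMeasurePreserving
  have hKF : AEMeasurable (fun z : G × G => K (z.1 - z.2) ^ ρ * F z.2) (μ.prod μ) :=
    (hKsub.pow_const ρ).mul hF.comp_snd
  calc ∫⁻ x, (∫⁻ y, K (x - y) * F y ∂μ) ^ ρ ∂μ
      ≤ ∫⁻ x, (∫⁻ y, K (x - y) ^ ρ * F y ∂μ) * (∫⁻ y, F y ∂μ) ^ (ρ - 1) ∂μ :=
      lintegral_mono fun x => rpow_lintegral_mul_le (hKleft x) hF hρ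
    _ = (∫⁻ x, ∫⁻ y, K (x - y) ^ ρ * F y ∂μ ∂μ) * (∫⁻ y, F y ∂μ) ^ (ρ - 1) :=
      lintegral_mul_const'' _ hKF.lintegral_prod_right'
    _ = (∫⁻ y, ∫⁻ x, K (x - y) ^ ρ * F y ∂μ ∂μ) * (∫⁻ y, F y ∂μ) ^ (ρ - 1) := by
      rw [lintegral_lintegral_swap hKF]
    _ = (∫⁻ x, K x ^ ρ ∂μ) * (∫⁻ y, F y ∂μ) * (∫⁻ y, F y ∂μ) ^ (ρ - 1) := by
      simp only [lintegral_mul_const'' _ ((hKright _).pow_const ρ),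
        lintegral_sub_right_eq_self fun x => K x ^ ρ]
      rw [lintegral_const_mul'' _ hF]
    _ = (∫⁻ x, K x ^ ρ ∂μ) * (∫⁻ y, F y ∂μ) ^ ρ := by
      rw [mul_assoc]
      nth_rw 1 [← ENNReal.rpow_one (∫⁻ y, F y ∂μ)]
      rw [← ENNReal.rpow_add_of_nonneg _ _ zero_le_one (sub_nonneg.2 hρ), add_sub_cancel]

lemma lintegral_sub_mul_le_Lp_mul_Lq (hpq : m.HolderConjugate q) (hK : AEMeasurable K μ)
    (hF : AEMeasurable F μ) (x : G) :
    ∫⁻ y, K (x - y) * F y ∂μ ≤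
      (∫⁻ y, K y ^ q ∂μ) ^ (1 / q) * (∫⁻ y, F y ^ m ∂μ) ^ (1 / m) := by
  have hKx : AEMeasurable (fun y => K (x - y)) μ :=
    hK.comp_quasiMeasurePreserving (quasiMeasurePreserving_sub_left μ x)
  simpa only [Pi.mul_apply, lintegral_sub_left_eq_self (fun y => K y ^ q) x] using
    ENNReal.lintegral_mul_le_Lp_mul_Lq μ hpq.symm hKx hF

lemma lintegral_sub_mul_mul_const_le_two (hmq : m.HolderConjugate q) (hp : AEMeasurable p μ)
    (hmp : ∀ᵐ x ∂μ, m ≤ p x) {L : ℝ≥0∞} (hL : L ≤ 1)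
    (hs : ∫⁻ x in {x | m < p x}, L ^ (1 / m - 1 / p x)⁻¹ ∂μ ≤ 1)
    (hK : AEMeasurable K μ) (hF : AEMeasurable F μ)
    (hKq : ∫⁻ x, K x ^ q ∂μ ≤ 1) (hFp : ∫⁻ x, F x ^ p x ∂μ ≤ 1) (x : G) :
    (∫⁻ y, K (x - y) * F y ∂μ) * L ≤ 2 := by
  have hFm : ∫⁻ y, (F y * L) ^ m ∂μ ≤ 2 :=
    calc ∫⁻ y, (F y * L) ^ m ∂μ
        ≤ ∫⁻ y, F y ^ p y ∂μ + ∫⁻ y in {y | m < p y}, L ^ (1 / m - 1 / p y)⁻¹ ∂μ :=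
        lintegral_mul_const_rpow_le hp hmq.pos hmp hF hL
      _ ≤ 1 + 1 := add_le_add hFp hs
      _ = 2 := one_add_one_eq_two
  calc (∫⁻ y, K (x - y) * F y ∂μ) * L
    _ = ∫⁻ y, K (x - y) * (F y * L) ∂μ := by
      simp only [← lintegral_mul_const' _ _ (ne_top_of_le_ne_top ENNReal.one_ne_top hL), mul_assoc]
    _ ≤ (∫⁻ y, K y ^ q ∂μ) ^ (1 / q) * (∫⁻ y, (F y * L) ^ m ∂μ) ^ (1 / m) :=
      lintegral_sub_mul_le_Lp_mul_Lq hmq hK (hF.mul_const L) x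
    _ ≤ 1 * 2 ^ (1 / m) :=
      mul_le_mul' (ENNReal.rpow_le_one hKq hmq.symm.one_div_nonneg)
        (ENNReal.rpow_le_rpow hFm hmq.one_div_nonneg)
    _ ≤ 1 * 2 ^ (1 : ℝ) := by
      gcongr
      · exact one_le_two
      · exact (div_le_one hmq.pos).2 hmq.lt.le
    _ = 2 := by rw [one_mul, ENNReal.rpow_one]

lemma lintegral_sub_mul_le_two_mul (hmq : m.HolderConjugate q) (hp : AEMeasurable p μ)
    (hmp : ∀ᵐ x ∂μ, m ≤ p x) (hlam : 1 ≤ lam)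
    (hs : ∫⁻ x in {x | m < p x}, ENNReal.ofReal (1 / lam) ^ (1 / m - 1 / p x)⁻¹ ∂μ ≤ 1)
    (hK : AEMeasurable K μ) (hF : AEMeasurable F μ)
    (hKq : ∫⁻ x, K x ^ q ∂μ ≤ 1) (hFp : ∫⁻ x, F x ^ p x ∂μ ≤ 1) (x : G) :
    ∫⁻ y, K (x - y) * F y ∂μ ≤ ENNReal.ofReal (2 * lam) := by
  have hlam0 : 0 < lam := one_pos.trans_le hlam
  have h := lintegral_sub_mul_mul_const_le_two hmq hp hmp
    (ENNReal.ofReal_le_one.2 ((div_le_one hlam0).2 hlam)) hs hK hF hKq hFp x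
  rwa [one_div, ENNReal.ofReal_inv_of_pos hlam0, ← div_eq_mul_inv,
    ENNReal.div_le_iff (by simpa using hlam0) ENNReal.ofReal_ne_top, ← ENNReal.ofReal_ofNat,
    ← ENNReal.ofReal_mul zero_le_two] at h

lemma modular_convolution_div_le_one (hmq : m.HolderConjugate q) (hp : AEMeasurable p μ)
    (hmp : ∀ᵐ x ∂μ, m ≤ p x) (hρ : 1 ≤ ρ) (hρr : ∀ᵐ x ∂μ, ρ ≤ r x) (hlam : 1 ≤ lam)
    (hs : ∫⁻ x in {x | m < p x}, ENNReal.ofReal (1 / lam) ^ (1 / m - 1 / p x)⁻¹ ∂μ ≤ 1)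
    (hk : AEMeasurable k μ) (hf : AEMeasurable f μ)
    (hkq : modular μ (fun _ => q) k ≤ 1) (hkρ : modular μ (fun _ => ρ) k ≤ 1)
    (hfp : modular μ p f ≤ 1) (hf1 : modular μ (fun _ => 1) f ≤ 1) :
    modular μ r (fun x => (∫ y, k (x - y) * f y ∂μ) / (2 * lam)) ≤ 1 := by
  set K : G → ℝ≥0∞ := fun x => ENNReal.ofReal |k x|
  set F : G → ℝ≥0∞ := fun x => ENNReal.ofReal |f x|
  have hK : AEMeasurable K μ := hk.abs.ennreal_ofReal
  have hF : AEMeasurable F μ := hf.abs.ennreal_ofReal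
  set H : G → ℝ≥0∞ := fun x => ∫⁻ y, K (x - y) * F y ∂μ
  set c : ℝ≥0∞ := ENNReal.ofReal (2 * lam)
  have hc : 1 ≤ c := ENNReal.one_le_ofReal.2 (by linarith)
  have hconv (x : G) : ENNReal.ofReal |(∫ y, k (x - y) * f y ∂μ) / (2 * lam)| ≤ H x / c := by
    have hlam2 : 0 < 2 * lam := by linarith
    rw [abs_div, abs_of_pos hlam2, ENNReal.ofReal_div_of_pos hlam2]
    exact ENNReal.div_le_div_right (ofReal_abs_integral_mul_le _ f) c
  have hHc (x : G) : H x / c ≤ 1 :=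
    ENNReal.div_le_of_le_mul
      ((lintegral_sub_mul_le_two_mul hmq hp hmp hlam hs hK hF hkq hfp x).trans_eq (one_mul c).symm)
  have hF1 : ∫⁻ y, F y ∂μ ≤ 1 := by simpa only [modular, ENNReal.rpow_one] using hf1
  have hρ0 : 0 ≤ ρ := zero_le_one.trans hρ
  calc modular μ r (fun x => (∫ y, k (x - y) * f y ∂μ) / (2 * lam))
      ≤ ∫⁻ x, ENNReal.ofReal |(∫ y, k (x - y) * f y ∂μ) / (2 * lam)| ^ ρ ∂μ :=
      lintegral_rpow_le_lintegral_rpow_of_le_one hρr fun x => (hconv x).trans (hHc x)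
    _ ≤ ∫⁻ x, H x ^ ρ ∂μ :=
      lintegral_mono fun x => ENNReal.rpow_le_rpow
        ((hconv x).trans (ENNReal.div_le_of_le_mul (le_mul_of_one_le_right' hc))) hρ0
    _ ≤ (∫⁻ x, K x ^ ρ ∂μ) * (∫⁻ y, F y ∂μ) ^ ρ :=
      lintegral_rpow_lintegral_sub_mul_le hK hF hρ
    _ ≤ 1 := mul_le_one' hkρ (ENNReal.rpow_le_one hF1 hρ0)

lemma luxemburgNorm_convolution_le {a b : ℝ} (hmq : m.HolderConjugate q) (hp : AEMeasurable p μ)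
    (hmp : ∀ᵐ x ∂μ, m ≤ p x) (hρ : 1 ≤ ρ) (hρr : ∀ᵐ x ∂μ, ρ ≤ r x) (hlam : 1 ≤ lam)
    (hs : ∫⁻ x in {x | m < p x}, ENNReal.ofReal (1 / lam) ^ (1 / m - 1 / p x)⁻¹ ∂μ ≤ 1)
    (hk : AEMeasurable k μ) (hf : AEMeasurable f μ) (ha : 0 < a) (hb : 0 < b)
    (hkq : modular μ (fun _ => q) (fun x => k x / a) ≤ 1)
    (hkρ : modular μ (fun _ => ρ) (fun x => k x / a) ≤ 1)
    (hfp : modular μ p (fun x => f x / b) ≤ 1)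
    (hf1 : modular μ (fun _ => 1) (fun x => f x / b) ≤ 1) :
    luxemburgNorm μ r (fun x => ∫ y, k (x - y) * f y ∂μ) ≤ 2 * lam * (a * b) := by
  have hscale (x : G) : (∫ y, k (x - y) / a * (f y / b) ∂μ) / (2 * lam) =
      (∫ y, k (x - y) * f y ∂μ) / (2 * lam * (a * b)) := by
    simp only [div_mul_div_comm, integral_div]
    rw [div_div, mul_comm (a * b)]
  have h := modular_convolution_div_le_one hmq hp hmp hρ hρr hlam hs
    (hk.div_const a) (hf.div_const b) hkq hkρ hfp hf1
  simp only [hscale] at h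
  exact luxemburgNorm_le (by positivity) h

end Convolution

end VariableExponent

open VariableExponent

theorem statement8_general {G : Type*} [MeasurableSpace G] [AddGroup G] [MeasurableAdd₂ G]
    [MeasurableNeg G] {μ : Measure G} [SFinite μ] [μ.IsAddLeftInvariant] [μ.IsNegInvariant]
    {p r k f : G → ℝ} {m q ρ lam : ℝ} (hmq : m.HolderConjugate q) (hp : AEMeasurable p μ)
    (hmp : ∀ᵐ x ∂μ, m ≤ p x) (hρ : 1 ≤ ρ) (hρr : ∀ᵐ x ∂μ, ρ ≤ r x) (hlam : 1 ≤ lam)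
    (hs : ∫⁻ x in {x | m < p x}, ENNReal.ofReal (1 / lam) ^ (1 / m - 1 / p x)⁻¹ ∂μ ≤ 1)
    (hkq : MemVariableLp μ (fun _ => q) k) (hkρ : MemVariableLp μ (fun _ => ρ) k)
    (hfp : MemVariableLp μ p f) (hf1 : MemVariableLp μ (fun _ => 1) f) :
    luxemburgNorm μ r (fun x => ∫ y, k (x - y) * f y ∂μ) ≤
      2 * lam * max (luxemburgNorm μ (fun _ => q) k) (luxemburgNorm μ (fun _ => ρ) k) *
        max (luxemburgNorm μ p f) (luxemburgNorm μ (fun _ => 1) f) := by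
  have hlam2 : 0 < 2 * lam := by linarith
  have hp0 : ∀ᵐ x ∂μ, 0 ≤ p x := hmp.mono fun x hx => hmq.nonneg.trans hx
  rw [mul_assoc, ← div_le_iff₀' hlam2]
  refine le_mul_of_forall_lt₀ fun a ha b hb => (div_le_iff₀' hlam2).2 ?_
  obtain ⟨haq, haρ⟩ := max_lt_iff.1 ha
  obtain ⟨hbp, hb1⟩ := max_lt_iff.1 hb
  have ha0 : 0 < a := luxemburgNorm_nonneg.trans_lt haq
  have hb0 : 0 < b := luxemburgNorm_nonneg.trans_lt hbp
  exact luxemburgNorm_convolution_le hmq hp hmp hρ hρr hlam hs hkq.1 hfp.1 ha0 hb0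
    (hkq.modular_div_le_one (.of_forall fun _ => hmq.symm.nonneg) haq)
    (hkρ.modular_div_le_one (.of_forall fun _ => zero_le_one.trans hρ) haρ)
    (hfp.modular_div_le_one hp0 hbp)
    (hf1.modular_div_le_one (.of_forall fun _ => zero_le_one) hb1)

/-- Theorem 3.9(4) of the paper: if `1 ∈ L^{s(·)}` where `1/s(x) = max(1/p⁻ - 1/p(x), 0)`,
then `‖k * f‖_{L^{r(·)}} ≤ C ‖k‖_{L^{q⁺} ∩ L^{r⁻}} ‖f‖_{L^{p(·)} ∩ L^1}`, where
`q⁺ = p⁻/(p⁻-1)` is the supremum of the conjugate exponent of `p`.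
The hypothesis `1 ∈ L^{s(·)}` is encoded through the variable exponent modular of the
constant function `1/lam`: on the set where `s(x) = ∞` (i.e. `p(x) = p⁻`) the modular
contributes `0` since `lam ≥ 1`, and elsewhere `s(x) = (1/p⁻ - 1/p(x))⁻¹`. -/
theorem statement8 (n : ℕ) (hn : 1 ≤ n)
    (r pexp : Esp n → ℝ) (hrmeas : Measurable r) (hpmeas : Measurable pexp)
    (hr1 : ∀ x, 1 ≤ r x) (hp1 : ∀ x, 1 ≤ pexp x)
    (rm pm : ℝ) (hrm : rm = essInf r volume) (hpm : pm = essInf pexp volume)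
    (hpm1 : 1 < pm)
    (hs : ∃ lam : ℝ, 1 ≤ lam ∧
      ∫⁻ x in {x : Esp n | pm < pexp x},
        (ENNReal.ofReal (1 / lam)) ^ ((1 / pm - 1 / pexp x)⁻¹) ∂volume ≤ 1) :
    ∃ C : ℝ, 0 < C ∧ ∀ k f : Esp n → ℝ,
      MemVLp n (fun _ => pm / (pm - 1)) k → MemVLp n (fun _ => rm) k →
      MemVLp n pexp f → MemVLp n (fun _ => (1 : ℝ)) f →
      luxNorm n r (convR n k f) ≤
        C * max (luxNorm n (fun _ => pm / (pm - 1)) k) (luxNorm n (fun _ => rm) k) *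
          max (luxNorm n pexp f) (luxNorm n (fun _ => (1 : ℝ)) f) := by
  subst hrm hpm
  obtain ⟨lam, hlam, hs⟩ := hs
  exact ⟨2 * lam, by linarith, fun k f hkq hkr hfp hf1 =>
    statement8_general (.conjExponent hpm1) hpmeas.aemeasurable
      (ae_essInf_le_of_ae_le (.of_forall hp1)) (le_essInf_of_ae_le_real (.of_forall hr1))
      (ae_essInf_le_of_ae_le (.of_forall hr1)) hlam hs hkq hkr hfp hf1⟩
end
end

section
/- Let n ≥ 1, m > n, and let p ∈ P^log(ℝ^n) be a measurable exponent with 2 ≤ p⁻ = p_∞ and p⁺ < ∞. Define φ(t) = 2/p⁻ − 1/p⁺ for 0 < t ≤ 1 and φ(t) = 1/p⁺ for t > 1. Then there exists a constant C > 0, depending only on m, n and p, such that for every t > 0 and all u, v ∈ L^{p(·)}(ℝ^n), ‖η_{t,m} * (uv)‖_{L^{p(·)}(ℝ^n)} ≤ C t^{−nφ(t)} ‖u‖_{L^{p(·)}(ℝ^n)} ‖v‖_{L^{p(·)}(ℝ^n)}. -/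
open MeasureTheory Filter Real
open scoped ENNReal

noncomputable section

/-!
The decay half of the log-Hölder condition embeds `L^{p(·)}` into `L^{p⁻}`: where `|u(x)|` is not
already smaller than an integrable power of `1 + |x|`, replacing the exponent `p(x)` by `p⁻` costs
only a bounded factor. By Cauchy–Schwarz, `uv` is then bounded in `L^r` with `r = p⁻ / 2 ≥ 1`.
Jensen's inequality for the measure `η_{t,m}(x - y) dy`, whose mass does not depend on `t`, shows
that `w = η_{t,m} * (uv)` satisfies `|w|^r ≤ A t^{-n}` pointwise and `∫ |w|^r ≤ A`. Writing
`|w|^p = |w|^r (|w|^r)^{p/r - 1}` and using the pointwise bound in the second factor gives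
`∫ |w / (A t^{-nφ(t)})|^{p(x)} dx ≤ 1`, since `t^{-n(2/p⁻ - 1/p(x))} ≤ t^{-nφ(t)}`.
-/

theorem exists_one_le_and_le_ofReal {a b : ℝ≥0∞} (ha : a ≠ ∞) (hb : b ≠ ∞) :
    ∃ A : ℝ, 1 ≤ A ∧ a ≤ ENNReal.ofReal A ∧ b ≤ ENNReal.ofReal A := by
  refine ⟨max 1 (max a.toReal b.toReal), le_max_left _ _, ?_, ?_⟩
  · exact (ENNReal.le_ofReal_iff_toReal_le ha (by positivity)).2 (by simp)
  · exact (ENNReal.le_ofReal_iff_toReal_le hb (by positivity)).2 (by simp)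

section LIntegral

theorem lintegral_mul_rpow_le {α : Type*} [MeasurableSpace α] {μ : Measure α} {g w : α → ℝ≥0∞}
    (hg : AEMeasurable g μ) (hw : AEMeasurable w μ) {r : ℝ} (hr : 1 ≤ r) :
    (∫⁻ y, g y * w y ∂μ) ^ r ≤ (∫⁻ y, g y ∂μ) ^ (r - 1) * ∫⁻ y, g y * w y ^ r ∂μ := by
  have hr0 : 0 < r := by linarith
  have hinv : 0 ≤ 1 - 1 / r := by rw [sub_nonneg, div_le_one hr0]; exact hr
  have split (y : α) : g y * w y = g y ^ (1 - 1 / r) * (g y * w y ^ r) ^ (1 / r) := by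
    rw [ENNReal.mul_rpow_of_nonneg _ _ (by positivity), ← mul_assoc,
      ← ENNReal.rpow_add_of_nonneg _ _ hinv (by positivity), sub_add_cancel, ENNReal.rpow_one,
      ← ENNReal.rpow_mul, mul_one_div_cancel hr0.ne', ENNReal.rpow_one]
  calc (∫⁻ y, g y * w y ∂μ) ^ r
      ≤ ((∫⁻ y, g y ∂μ) ^ (1 - 1 / r) * (∫⁻ y, g y * w y ^ r ∂μ) ^ (1 / r)) ^ r := by
        simp only [split]
        gcongr
        exact ENNReal.lintegral_mul_norm_pow_le hg (hg.mul (hw.pow_const r)) hinv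
          (by positivity) (by ring)
    _ = (∫⁻ y, g y ∂μ) ^ (r - 1) * ∫⁻ y, g y * w y ^ r ∂μ := by
        rw [ENNReal.mul_rpow_of_nonneg _ _ hr0.le, ← ENNReal.rpow_mul, ← ENNReal.rpow_mul,
          one_div_mul_cancel hr0.ne', ENNReal.rpow_one, sub_mul, one_div_mul_cancel hr0.ne',
          one_mul]

theorem lintegral_mul_rpow_half_le {α : Type*} [MeasurableSpace α] {μ : Measure α}
    {f g : α → ℝ≥0∞} (hf : AEMeasurable f μ) (hg : AEMeasurable g μ) {q : ℝ} (hq : 0 ≤ q)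
    {K : ℝ≥0∞} (hfK : ∫⁻ x, f x ^ q ∂μ ≤ K) (hgK : ∫⁻ x, g x ^ q ∂μ ≤ K) :
    ∫⁻ x, (f x * g x) ^ (q / 2) ∂μ ≤ K := by
  have split (x : α) :
      (f x * g x) ^ (q / 2) = (f x ^ q) ^ (1 / 2 : ℝ) * (g x ^ q) ^ (1 / 2 : ℝ) := by
    rw [ENNReal.mul_rpow_of_nonneg _ _ (by positivity), ← ENNReal.rpow_mul, ← ENNReal.rpow_mul,
      mul_one_div]
  calc ∫⁻ x, (f x * g x) ^ (q / 2) ∂μ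
      ≤ (∫⁻ x, f x ^ q ∂μ) ^ (1 / 2 : ℝ) * (∫⁻ x, g x ^ q ∂μ) ^ (1 / 2 : ℝ) := by
        simp only [split]
        exact ENNReal.lintegral_mul_norm_pow_le (hf.pow_const q) (hg.pow_const q)
          (by positivity) (by positivity) (by norm_num)
    _ ≤ K ^ (1 / 2 : ℝ) * K ^ (1 / 2 : ℝ) := by gcongr
    _ = K := by
        rw [← ENNReal.rpow_add_of_nonneg _ _ (by positivity) (by positivity), add_halves,
          ENNReal.rpow_one]

theorem lintegral_comp_inv_smul {E : Type*} [NormedAddCommGroup E] [NormedSpace ℝ E]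
    [MeasurableSpace E] [BorelSpace E] [FiniteDimensional ℝ E] (μ : Measure E) [μ.IsAddHaarMeasure]
    {f : E → ℝ≥0∞} (hf : Measurable f) {t : ℝ} (ht : t ≠ 0) :
    ∫⁻ x, f (t⁻¹ • x) ∂μ = ENNReal.ofReal |t ^ Module.finrank ℝ E| * ∫⁻ x, f x ∂μ := by
  rw [← lintegral_map (g := fun x ↦ t⁻¹ • x) hf (by fun_prop),
    Measure.map_addHaar_smul μ (inv_ne_zero ht), lintegral_smul_measure, inv_pow, inv_inv,
    smul_eq_mul]

end LIntegral

section AddGroupConvolution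

variable {G : Type*} [AddGroup G] [MeasurableSpace G] {μ : Measure G} {w g : G → ℝ≥0∞}

theorem lconvolution_le_lintegral_mul {M : ℝ≥0∞} (hw : AEMeasurable w μ) (hgM : ∀ x, g x ≤ M)
    (x : G) : (w ⋆ₗ[μ] g) x ≤ (∫⁻ y, w y ∂μ) * M := by
  rw [lconvolution_def, ← lintegral_mul_const'' _ hw]
  gcongr
  exact hgM _

variable [MeasurableAdd₂ G] [MeasurableNeg G] [μ.IsAddLeftInvariant]

theorem lintegral_lconvolution [SFinite μ] (hw : AEMeasurable w μ) (hg : Measurable g) :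
    ∫⁻ x, (w ⋆ₗ[μ] g) x ∂μ = (∫⁻ x, w x ∂μ) * ∫⁻ x, g x ∂μ := by
  simp only [lconvolution_def]
  rw [lintegral_lintegral_swap (by fun_prop), ← lintegral_mul_const'' _ hw]
  refine lintegral_congr fun y ↦ ?_
  rw [lintegral_const_mul _ (by fun_prop), lintegral_add_left_eq_self g (-y)]

end AddGroupConvolution

section AddCommGroupConvolution

variable {G : Type*} [AddCommGroup G] [MeasurableSpace G] [MeasurableAdd₂ G] [MeasurableNeg G]
  {μ : Measure G} [μ.IsAddLeftInvariant] [μ.IsNegInvariant] {w g : G → ℝ≥0∞}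

theorem lconvolution_rpow_le (hw : AEMeasurable w μ) (hg : Measurable g) {r : ℝ} (hr : 1 ≤ r)
    (x : G) :
    (w ⋆ₗ[μ] g) x ^ r ≤ (∫⁻ y, g y ∂μ) ^ (r - 1) * ((fun y ↦ w y ^ r) ⋆ₗ[μ] g) x := by
  simp only [lconvolution_def, neg_add_eq_sub, mul_comm _ (g _)]
  rw [← lintegral_sub_left_eq_self g x]
  exact lintegral_mul_rpow_le (by fun_prop) hw hr

theorem lintegral_lconvolution_rpow_le [SFinite μ] (hw : AEMeasurable w μ) (hg : Measurable g)
    {r : ℝ} (hr : 1 ≤ r) :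
    ∫⁻ x, (w ⋆ₗ[μ] g) x ^ r ∂μ ≤ (∫⁻ x, g x ∂μ) ^ r * ∫⁻ x, w x ^ r ∂μ := by
  have hwr : AEMeasurable (fun y ↦ w y ^ r) μ := hw.pow_const r
  calc ∫⁻ x, (w ⋆ₗ[μ] g) x ^ r ∂μ
      ≤ ∫⁻ x, (∫⁻ y, g y ∂μ) ^ (r - 1) * ((fun y ↦ w y ^ r) ⋆ₗ[μ] g) x ∂μ :=
        lintegral_mono (lconvolution_rpow_le hw hg hr)
    _ = (∫⁻ y, g y ∂μ) ^ (r - 1) * ((∫⁻ x, w x ^ r ∂μ) * ∫⁻ x, g x ∂μ) := by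
        rw [lintegral_const_mul'' _ (aemeasurable_lconvolution hwr hg.aemeasurable),
          lintegral_lconvolution hwr hg]
    _ = (∫⁻ x, g x ∂μ) ^ r * ∫⁻ x, w x ^ r ∂μ := by
        nth_rw 2 [← ENNReal.rpow_one (∫⁻ x, g x ∂μ)]
        rw [mul_left_comm, ← ENNReal.rpow_add_of_nonneg _ _ (by linarith) zero_le_one,
          sub_add_cancel, mul_comm]

end AddCommGroupConvolution

section LuxemburgNorm

variable {n : ℕ} {p : Esp n → ℝ}

theorem vMod_eq_lintegral_enorm (f : Esp n → ℝ) : vMod n p f = ∫⁻ x, ‖f x‖ₑ ^ p x := by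
  simp only [vMod, Real.enorm_eq_ofReal_abs]

theorem luxNorm_le_of_vMod_div_le_one {f : Esp n → ℝ} {a : ℝ} (ha : 0 < a)
    (hf : vMod n p (fun x ↦ f x / a) ≤ 1) : luxNorm n p f ≤ a :=
  csInf_le ⟨0, fun _ h ↦ h.1.le⟩ ⟨ha, hf⟩

theorem exists_vMod_div_le_one_of_luxNorm_lt {f : Esp n → ℝ} (hf : MemVLp n p f) {a : ℝ}
    (ha : luxNorm n p f < a) : ∃ b, 0 < b ∧ b < a ∧ vMod n p (fun x ↦ f x / b) ≤ 1 := by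
  obtain ⟨b, ⟨hb, hfb⟩, hba⟩ := exists_lt_of_csInf_lt hf.2 ha
  exact ⟨b, hb, hba, hfb⟩

theorem luxNorm_le_mul_mul_of_vMod_le_one {T : (Esp n → ℝ) → (Esp n → ℝ) → Esp n → ℝ} {D : ℝ}
    (hD : 0 < D)
    (hom : ∀ u v a b, T (fun x ↦ u x / a) (fun x ↦ v x / b) = fun x ↦ T u v x / (a * b))
    (unit : ∀ u v, AEMeasurable u → AEMeasurable v → vMod n p u ≤ 1 → vMod n p v ≤ 1 →
      vMod n p (fun x ↦ T u v x / D) ≤ 1)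
    {u v : Esp n → ℝ} (hu : MemVLp n p u) (hv : MemVLp n p v) :
    luxNorm n p (T u v) ≤ D * luxNorm n p u * luxNorm n p v := by
  rw [mul_assoc, ← div_le_iff₀' hD]
  refine le_mul_of_forall_lt₀ fun a' ha' b' hb' ↦ ?_
  obtain ⟨a, ha, haa', hua⟩ := exists_vMod_div_le_one_of_luxNorm_lt hu ha'
  obtain ⟨b, hb, hbb', hvb⟩ := exists_vMod_div_le_one_of_luxNorm_lt hv hb'
  have scaled : vMod n p (fun x ↦ T u v x / (a * b * D)) ≤ 1 := by
    simpa only [hom, div_div] using unit _ _ (hu.1.div_const a) (hv.1.div_const b) hua hvb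
  calc luxNorm n p (T u v) / D
      ≤ a * b := (div_le_iff₀ hD).2 (luxNorm_le_of_vMod_div_le_one (by positivity) scaled)
    _ ≤ a' * b' := by gcongr; exact (ha.trans haa').le

theorem enorm_div_rpow_le {a D r q : ℝ} {A B : ℝ≥0∞} (hr : 0 < r) (hrq : r ≤ q)
    (hA0 : A ≠ 0) (hA : A ≠ ∞) (hD : 0 < D) (haB : ‖a‖ₑ ^ r ≤ B)
    (hBD : A * B ^ (q / r - 1) ≤ ENNReal.ofReal D ^ q) :
    ‖a / D‖ₑ ^ q ≤ A⁻¹ * ‖a‖ₑ ^ r := by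
  have hqr : 0 ≤ q / r - 1 := by rw [sub_nonneg, one_le_div hr]; exact hrq
  have hB : B ^ (q / r - 1) ≤ A⁻¹ * ENNReal.ofReal D ^ q := by
    rwa [← ENNReal.div_eq_inv_mul, ENNReal.le_div_iff_mul_le (.inl hA0) (.inl hA), mul_comm]
  have hdiv : ‖a / D‖ₑ = ‖a‖ₑ / ENNReal.ofReal D := by
    rw [Real.enorm_eq_ofReal_abs, abs_div, abs_of_pos hD, ENNReal.ofReal_div_of_pos hD,
      Real.enorm_eq_ofReal_abs]
  rw [hdiv, ENNReal.div_rpow_of_nonneg _ _ (hr.le.trans hrq)]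
  refine ENNReal.div_le_of_le_mul ?_
  calc ‖a‖ₑ ^ q = ‖a‖ₑ ^ r * (‖a‖ₑ ^ r) ^ (q / r - 1) := by
        rw [← ENNReal.rpow_mul, ← ENNReal.rpow_add_of_nonneg _ _ hr.le (by positivity)]
        congr 1
        field_simp
        ring
    _ ≤ ‖a‖ₑ ^ r * (A⁻¹ * ENNReal.ofReal D ^ q) := by
        gcongr
        exact (ENNReal.rpow_le_rpow haB hqr).trans hB
    _ = A⁻¹ * ‖a‖ₑ ^ r * ENNReal.ofReal D ^ q := by ring

theorem vMod_div_le_one {f : Esp n → ℝ} {D r : ℝ} {A B : ℝ≥0∞} (hr : 0 < r)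
    (hA0 : A ≠ 0) (hA : A ≠ ∞) (hD : 0 < D) (hrp : ∀ᵐ x, r ≤ p x)
    (hfB : ∀ᵐ x, ‖f x‖ₑ ^ r ≤ B) (hfA : ∫⁻ x, ‖f x‖ₑ ^ r ≤ A)
    (hBD : ∀ᵐ x, A * B ^ (p x / r - 1) ≤ ENNReal.ofReal D ^ p x) :
    vMod n p (fun x ↦ f x / D) ≤ 1 := by
  calc vMod n p (fun x ↦ f x / D) = ∫⁻ x, ‖f x / D‖ₑ ^ p x := vMod_eq_lintegral_enorm _
    _ ≤ ∫⁻ x, A⁻¹ * ‖f x‖ₑ ^ r := by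
        refine lintegral_mono_ae ?_
        filter_upwards [hrp, hfB, hBD] with x hrx hfx hBx
        exact enorm_div_rpow_le hr hrx hA0 hA hD hfx hBx
    _ = A⁻¹ * ∫⁻ x, ‖f x‖ₑ ^ r := lintegral_const_mul' _ _ (ENNReal.inv_ne_top.2 hA0)
    _ ≤ A⁻¹ * A := by gcongr
    _ = 1 := ENNReal.inv_mul_cancel hA0 hA

end LuxemburgNorm

section Embedding

theorem mul_sub_le_of_one_div_sub_le {p q c L : ℝ} (hq : 0 < q) (hqp : q ≤ p) (hL : 0 < L)
    (h : 1 / q - 1 / p ≤ c / L) : L * (p - q) ≤ p * q * c := by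
  have hp : 0 < p := hq.trans_le hqp
  rw [le_div_iff₀ hL] at h
  calc L * (p - q) = p * q * ((1 / q - 1 / p) * L) := by field_simp
    _ ≤ p * q * c := by gcongr

-- The two terms cover `s ^ (-N) ≤ a` and `a ≤ s ^ (-N)` respectively.
theorem rpow_le_exp_mul_rpow_add {a s p q c N : ℝ} (ha : 0 ≤ a) (hs : 1 < s) (hq : 0 < q)
    (hqp : q ≤ p) (hN : 0 ≤ N) (h : 1 / q - 1 / p ≤ c / log s) :
    a ^ q ≤ exp (N * (p * q * c)) * a ^ p + s ^ (-(N * q)) := by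
  have hs0 : 0 < s := by linarith
  rcases le_total a (s ^ (-N)) with hsmall | hlarge
  · calc a ^ q ≤ (s ^ (-N)) ^ q := by gcongr
      _ = s ^ (-(N * q)) := by rw [← rpow_mul hs0.le, neg_mul]
      _ ≤ exp (N * (p * q * c)) * a ^ p + s ^ (-(N * q)) :=
        le_add_of_nonneg_left (by positivity)
  · have ha0 : 0 < a := lt_of_lt_of_le (by positivity) hlarge
    have hdefect : a ^ (q - p) ≤ exp (N * (p * q * c)) := by
      calc a ^ (q - p) ≤ (s ^ (-N)) ^ (q - p) :=
            rpow_le_rpow_of_nonpos (by positivity) hlarge (by linarith)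
        _ = exp (N * (log s * (p - q))) := by
            rw [← rpow_mul hs0.le, rpow_def_of_pos hs0]
            ring_nf
        _ ≤ exp (N * (p * q * c)) := by
            gcongr exp (N * ?_)
            exact mul_sub_le_of_one_div_sub_le hq hqp (log_pos hs) h
    calc a ^ q = a ^ (q - p) * a ^ p := by rw [← rpow_add ha0, sub_add_cancel]
      _ ≤ exp (N * (p * q * c)) * a ^ p := by gcongr
      _ ≤ exp (N * (p * q * c)) * a ^ p + s ^ (-(N * q)) :=
        le_add_of_nonneg_right (by positivity)

variable {E : Type*} [NormedAddCommGroup E]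

theorem rpow_le_exp_mul_rpow_add_one_add_norm {a p P q c N : ℝ} (x : E) (ha : 0 ≤ a) (hq : 0 < q)
    (hqp : q ≤ p) (hpP : p ≤ P) (hN : 0 ≤ N)
    (h : |1 / p - 1 / q| ≤ c / log (exp 1 + ‖x‖)) :
    a ^ q ≤ exp (N * (P * q * c)) * a ^ p + (1 + ‖x‖) ^ (-(N * q)) := by
  have he : 1 < exp 1 := one_lt_exp_iff.2 one_pos
  have hs : 1 < exp 1 + ‖x‖ := by linarith [norm_nonneg x]
  have hc : 0 ≤ c := by
    have := (abs_nonneg _).trans h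
    rwa [le_div_iff₀ (log_pos hs), zero_mul] at this
  have hpq : 1 / q - 1 / p ≤ c / log (exp 1 + ‖x‖) := by
    rw [abs_sub_comm] at h
    exact (le_abs_self _).trans h
  calc a ^ q ≤ exp (N * (p * q * c)) * a ^ p + (exp 1 + ‖x‖) ^ (-(N * q)) :=
        rpow_le_exp_mul_rpow_add ha hs hq hqp hN hpq
    _ ≤ exp (N * (P * q * c)) * a ^ p + (1 + ‖x‖) ^ (-(N * q)) := by
        gcongr ?_ + ?_
        · gcongr
        · exact rpow_le_rpow_of_nonpos (by positivity) (by gcongr)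
            (neg_nonpos.2 (by positivity))

theorem lintegral_rpow_le_of_logHolder_decay [MeasurableSpace E] [BorelSpace E]
    {μ : Measure E} {p : E → ℝ} {P q c N : ℝ} (hq : 0 < q) (hqp : ∀ᵐ x ∂μ, q ≤ p x)
    (hpP : ∀ᵐ x ∂μ, p x ≤ P) (hN : 0 ≤ N)
    (hdecay : ∀ᵐ x ∂μ, |1 / p x - 1 / q| ≤ c / log (exp 1 + ‖x‖)) (u : E → ℝ) :
    ∫⁻ x, ‖u x‖ₑ ^ q ∂μ ≤ ENNReal.ofReal (exp (N * (P * q * c))) * ∫⁻ x, ‖u x‖ₑ ^ p x ∂μ +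
      ∫⁻ x, ENNReal.ofReal ((1 + ‖x‖) ^ (-(N * q))) ∂μ := by
  rw [← lintegral_const_mul' _ _ ENNReal.ofReal_ne_top, ← lintegral_add_right _ (by fun_prop)]
  refine lintegral_mono_ae ?_
  filter_upwards [hqp, hpP, hdecay] with x hqx hPx hx
  rw [Real.enorm_eq_ofReal_abs, ENNReal.ofReal_rpow_of_nonneg (abs_nonneg _) hq.le,
    ENNReal.ofReal_rpow_of_nonneg (abs_nonneg _) (hq.le.trans hqx),
    ← ENNReal.ofReal_mul (by positivity), ← ENNReal.ofReal_add (by positivity) (by positivity)]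
  exact ENNReal.ofReal_le_ofReal
    (rpow_le_exp_mul_rpow_add_one_add_norm x (abs_nonneg _) hq hqx hPx hN hx)

theorem exists_lintegral_rpow_le_of_vMod_le_one {n : ℕ} {p : Esp n → ℝ} {P q c : ℝ} (hq : 0 < q)
    (hqp : ∀ᵐ x, q ≤ p x) (hpP : ∀ᵐ x, p x ≤ P)
    (hdecay : ∀ᵐ x, |1 / p x - 1 / q| ≤ c / log (exp 1 + ‖x‖)) :
    ∃ K : ℝ≥0∞, K ≠ ∞ ∧ ∀ u : Esp n → ℝ, vMod n p u ≤ 1 → ∫⁻ x, ‖u x‖ₑ ^ q ≤ K := by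
  set N : ℝ := (n + 1) / q with hN
  set B := ENNReal.ofReal (exp (N * (P * q * c)))
  refine ⟨B + ∫⁻ x : Esp n, ENNReal.ofReal ((1 + ‖x‖) ^ (-(N * q))), ?_, fun u hu ↦ ?_⟩
  · refine ENNReal.add_ne_top.2 ⟨ENNReal.ofReal_ne_top, (finite_integral_one_add_norm ?_).ne⟩
    rw [finrank_euclideanSpace_fin, hN, div_mul_cancel₀ _ hq.ne']
    exact lt_add_one _
  · refine (lintegral_rpow_le_of_logHolder_decay (N := N) hq hqp hpP (by positivity) hdecay
      u).trans ?_
    rw [← vMod_eq_lintegral_enorm]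
    exact add_le_add_left (mul_le_of_le_one_right' hu) _

end Embedding

section Kernel

variable {n : ℕ} {t m : ℝ}

theorem measurable_etaKer : Measurable (etaKer n t m) := by
  unfold etaKer
  fun_prop

theorem etaKer_nonneg (ht : 0 ≤ t) (x : Esp n) : 0 ≤ etaKer n t m x := by
  unfold etaKer
  positivity

theorem etaKer_le (ht : 0 ≤ t) (hm : 0 ≤ m) (x : Esp n) : etaKer n t m x ≤ t ^ (-(n : ℝ)) :=
  mul_le_of_le_one_right (by positivity)
    (rpow_le_one_of_one_le_of_nonpos (le_add_of_nonneg_right (by positivity)) (neg_nonpos.2 hm))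

/-- The total mass of `η_{t,m}`, which does not depend on `t` (see `lintegral_enorm_etaKer`) and is
therefore written for `t = 1`. -/
def etaMass (n : ℕ) (m : ℝ) : ℝ≥0∞ :=
  ∫⁻ x : Esp n, ENNReal.ofReal ((1 + ‖x‖) ^ (-m))

theorem etaMass_ne_top (hm : (n : ℝ) < m) : etaMass n m ≠ ∞ :=
  (finite_integral_one_add_norm (by rwa [finrank_euclideanSpace_fin])).ne

theorem lintegral_enorm_etaKer (ht : 0 < t) : ∫⁻ x, ‖etaKer n t m x‖ₑ = etaMass n m := by
  have rescale (x : Esp n) : ‖etaKer n t m x‖ₑ =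
      ENNReal.ofReal (t ^ (-(n : ℝ))) * ENNReal.ofReal ((1 + ‖t⁻¹ • x‖) ^ (-m)) := by
    rw [Real.enorm_of_nonneg (etaKer_nonneg ht.le x), etaKer, ENNReal.ofReal_mul (by positivity),
      norm_smul, Real.norm_of_nonneg (by positivity), div_eq_inv_mul]
  simp only [rescale]
  rw [lintegral_const_mul _ (by fun_prop),
    lintegral_comp_inv_smul (f := fun x : Esp n ↦ ENNReal.ofReal ((1 + ‖x‖) ^ (-m))) volume
      (by fun_prop) ht.ne',
    finrank_euclideanSpace_fin, abs_of_pos (by positivity), ← mul_assoc,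
    ← ENNReal.ofReal_mul (by positivity), rpow_neg ht.le, rpow_natCast,
    inv_mul_cancel₀ (by positivity), ENNReal.ofReal_one, one_mul, etaMass]

theorem enorm_convR_le_lconvolution (g f : Esp n → ℝ) (x : Esp n) :
    ‖convR n g f x‖ₑ ≤ ((fun y ↦ ‖f y‖ₑ) ⋆ₗ fun y ↦ ‖g y‖ₑ) x := by
  refine (enorm_integral_le_lintegral_enorm _).trans_eq (lintegral_congr fun y ↦ ?_)
  rw [enorm_mul, mul_comm, neg_add_eq_sub]

theorem convR_div_mul_div (g u v : Esp n → ℝ) (a b : ℝ) :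
    convR n g (fun x ↦ u x / a * (v x / b)) =
      fun x ↦ convR n g (fun x ↦ u x * v x) x / (a * b) := by
  ext x
  simp only [convR, div_mul_div_comm]
  rw [← integral_div]
  simp only [mul_div_assoc]

variable {f : Esp n → ℝ} {r : ℝ}

theorem enorm_convR_etaKer_rpow_le (ht : 0 < t) (hm : 0 ≤ m) (hr : 1 ≤ r) (hf : AEMeasurable f)
    (x : Esp n) :
    ‖convR n (etaKer n t m) f x‖ₑ ^ r ≤
      etaMass n m ^ (r - 1) * (∫⁻ y, ‖f y‖ₑ ^ r) * ENNReal.ofReal (t ^ (-(n : ℝ))) := by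
  have kernel_le (y : Esp n) : ‖etaKer n t m y‖ₑ ≤ ENNReal.ofReal (t ^ (-(n : ℝ))) := by
    rw [Real.enorm_of_nonneg (etaKer_nonneg ht.le y)]
    exact ENNReal.ofReal_le_ofReal (etaKer_le ht.le hm y)
  rw [mul_assoc, ← lintegral_enorm_etaKer ht]
  calc ‖convR n (etaKer n t m) f x‖ₑ ^ r
      ≤ ((fun y ↦ ‖f y‖ₑ) ⋆ₗ fun y ↦ ‖etaKer n t m y‖ₑ) x ^ r := by
        gcongr
        exact enorm_convR_le_lconvolution _ f x
    _ ≤ (∫⁻ y, ‖etaKer n t m y‖ₑ) ^ (r - 1) *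
          ((fun y ↦ ‖f y‖ₑ ^ r) ⋆ₗ fun y ↦ ‖etaKer n t m y‖ₑ) x :=
        lconvolution_rpow_le hf.enorm measurable_etaKer.enorm hr x
    _ ≤ (∫⁻ y, ‖etaKer n t m y‖ₑ) ^ (r - 1) *
          ((∫⁻ y, ‖f y‖ₑ ^ r) * ENNReal.ofReal (t ^ (-(n : ℝ)))) := by
        gcongr
        exact lconvolution_le_lintegral_mul (hf.enorm.pow_const r) kernel_le x

theorem lintegral_enorm_convR_etaKer_rpow_le (ht : 0 < t) (hr : 1 ≤ r) (hf : AEMeasurable f) :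
    ∫⁻ x, ‖convR n (etaKer n t m) f x‖ₑ ^ r ≤ etaMass n m ^ r * ∫⁻ x, ‖f x‖ₑ ^ r := by
  rw [← lintegral_enorm_etaKer ht]
  refine le_trans (lintegral_mono fun x ↦ ?_)
    (lintegral_lconvolution_rpow_le hf.enorm measurable_etaKer.enorm hr)
  gcongr
  exact enorm_convR_le_lconvolution _ f x

end Kernel

section SmoothingExponent

/-- The exponent `φ(t)` of the convolution estimate, with `pm = p⁻` and `pp = p⁺`. -/
def smoothingExponent (pm pp t : ℝ) : ℝ :=
  if t ≤ 1 then 2 / pm - 1 / pp else 1 / pp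

variable {pm pp p t d : ℝ}

theorem rpow_le_rpow_smoothingExponent (hpm : 0 < pm) (hmp : pm ≤ p) (hpp : p ≤ pp) (ht : 0 < t)
    (hd : 0 ≤ d) :
    t ^ (-d * (2 / pm - 1 / p)) ≤ t ^ (-d * smoothingExponent pm pp t) := by
  have hp : 0 < p := hpm.trans_le hmp
  have hpp_inv : 1 / pp ≤ 1 / p := one_div_le_one_div_of_le hp hpp
  have hpm_inv : 1 / p ≤ 1 / pm := one_div_le_one_div_of_le hpm hmp
  have htwo : 2 / pm = 1 / pm + 1 / pm := by ring
  unfold smoothingExponent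
  split_ifs with hle
  · exact rpow_le_rpow_of_exponent_ge ht hle
      (mul_le_mul_of_nonpos_left (by linarith) (neg_nonpos.2 hd))
  · exact rpow_le_rpow_of_exponent_le (le_of_not_ge hle)
      (mul_le_mul_of_nonpos_left (by linarith) (neg_nonpos.2 hd))

theorem mul_rpow_le_rpow_smoothingExponent {A : ℝ} (hA : 1 ≤ A) (hpm : 2 ≤ pm) (hmp : pm ≤ p)
    (hpp : p ≤ pp) (ht : 0 < t) (hd : 0 ≤ d) :
    A * (A * t ^ (-d)) ^ (p / (pm / 2) - 1) ≤ (A * t ^ (-d * smoothingExponent pm pp t)) ^ p := by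
  have hA0 : 0 < A := by linarith
  have hpm0 : 0 < pm := by linarith
  have hp : 0 < p := by linarith
  have hexp : -d * (p / (pm / 2) - 1) = -d * (2 / pm - 1 / p) * p := by field_simp
  calc A * (A * t ^ (-d)) ^ (p / (pm / 2) - 1)
      = A ^ (p / (pm / 2)) * (t ^ (-d * (2 / pm - 1 / p))) ^ p := by
        rw [mul_rpow hA0.le (by positivity), ← rpow_mul ht.le, hexp, rpow_mul ht.le,
          rpow_sub_one hA0.ne', ← mul_assoc, mul_div_cancel₀ _ hA0.ne']
    _ ≤ A ^ p * (t ^ (-d * smoothingExponent pm pp t)) ^ p := by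
        gcongr ?_ * ?_ ^ p
        · exact rpow_le_rpow_of_exponent_le hA (div_le_self hp.le (by linarith))
        · exact rpow_le_rpow_smoothingExponent hpm0 hmp hpp ht hd
    _ = (A * t ^ (-d * smoothingExponent pm pp t)) ^ p :=
        (mul_rpow hA0.le (by positivity)).symm

end SmoothingExponent

section MainEstimate

variable {n : ℕ} {m : ℝ} {p : Esp n → ℝ} {pm pp : ℝ}

theorem vMod_convR_etaKer_div_le_one {t A : ℝ} {K : ℝ≥0∞} {f : Esp n → ℝ} (hm : 0 ≤ m)
    (hmp : ∀ᵐ x, pm ≤ p x) (hpp : ∀ᵐ x, p x ≤ pp) (hpm : 2 ≤ pm) (hA : 1 ≤ A) (ht : 0 < t)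
    (hsupA : etaMass n m ^ (pm / 2 - 1) * K ≤ ENNReal.ofReal A)
    (hintA : etaMass n m ^ (pm / 2) * K ≤ ENNReal.ofReal A)
    (hf : AEMeasurable f) (hfK : ∫⁻ x, ‖f x‖ₑ ^ (pm / 2) ≤ K) :
    vMod n p (fun x ↦ convR n (etaKer n t m) f x /
      (A * t ^ (-(n : ℝ) * smoothingExponent pm pp t))) ≤ 1 := by
  have hr : 1 ≤ pm / 2 := by linarith
  have hA0 : 0 < A := by linarith
  refine vMod_div_le_one (r := pm / 2) (A := ENNReal.ofReal A)
    (B := ENNReal.ofReal (A * t ^ (-(n : ℝ)))) (by linarith) (ENNReal.ofReal_pos.2 hA0).ne'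
    ENNReal.ofReal_ne_top (by positivity) ?_ (ae_of_all _ fun x ↦ ?_) ?_ ?_
  · filter_upwards [hmp] with x hx
    linarith
  · rw [ENNReal.ofReal_mul hA0.le]
    refine (enorm_convR_etaKer_rpow_le ht hm hr hf x).trans ?_
    gcongr
    exact (mul_le_mul_right hfK _).trans hsupA
  · exact (lintegral_enorm_convR_etaKer_rpow_le ht hr hf).trans
      ((mul_le_mul_right hfK _).trans hintA)
  · filter_upwards [hmp, hpp] with x hmx hpx
    have hexp : 0 ≤ p x / (pm / 2) - 1 := by
      rw [sub_nonneg, one_le_div (by linarith)]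
      linarith
    rw [ENNReal.ofReal_rpow_of_nonneg (by positivity) hexp,
      ENNReal.ofReal_rpow_of_nonneg (by positivity) (by linarith), ← ENNReal.ofReal_mul hA0.le]
    exact ENNReal.ofReal_le_ofReal
      (mul_rpow_le_rpow_smoothingExponent hA hpm hmx hpx ht n.cast_nonneg)

theorem exists_vMod_convR_etaKer_mul_div_le_one {c : ℝ} (hm : (n : ℝ) < m)
    (hmp : ∀ᵐ x, pm ≤ p x) (hpp : ∀ᵐ x, p x ≤ pp)
    (hdecay : ∀ᵐ x, |1 / p x - 1 / pm| ≤ c / log (exp 1 + ‖x‖)) (hpm : 2 ≤ pm) :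
    ∃ A : ℝ, 0 < A ∧ ∀ t : ℝ, 0 < t → ∀ u v : Esp n → ℝ, AEMeasurable u → AEMeasurable v →
      vMod n p u ≤ 1 → vMod n p v ≤ 1 →
      vMod n p (fun x ↦ convR n (etaKer n t m) (fun x ↦ u x * v x) x /
        (A * t ^ (-(n : ℝ) * smoothingExponent pm pp t))) ≤ 1 := by
  have hpm0 : 0 < pm := by linarith
  obtain ⟨K, hK, embedding⟩ := exists_lintegral_rpow_le_of_vMod_le_one hpm0 hmp hpp hdecay
  have bound_ne_top {s : ℝ} (hs : 0 ≤ s) : etaMass n m ^ s * K ≠ ∞ :=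
    ENNReal.mul_ne_top (ENNReal.rpow_ne_top_of_nonneg hs (etaMass_ne_top hm)) hK
  obtain ⟨A, hA1, hsupA, hintA⟩ := exists_one_le_and_le_ofReal
    (bound_ne_top (s := pm / 2 - 1) (by linarith)) (bound_ne_top (s := pm / 2) (by linarith))
  refine ⟨A, by linarith, fun t ht u v hu hv hu1 hv1 ↦ ?_⟩
  have huv : ∫⁻ x, ‖u x * v x‖ₑ ^ (pm / 2) ≤ K := by
    simp only [enorm_mul]
    exact lintegral_mul_rpow_half_le hu.enorm hv.enorm hpm0.le (embedding u hu1) (embedding v hv1)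
  exact vMod_convR_etaKer_div_le_one (n.cast_nonneg.trans hm.le) hmp hpp hpm hA1 ht hsupA hintA
    (hu.mul hv) huv

theorem statement10_general {c : ℝ} (hm : (n : ℝ) < m)
    (hmp : ∀ᵐ x, pm ≤ p x) (hpp : ∀ᵐ x, p x ≤ pp)
    (hdecay : ∀ᵐ x, |1 / p x - 1 / pm| ≤ c / log (exp 1 + ‖x‖)) (hpm : 2 ≤ pm) :
    ∃ C : ℝ, 0 < C ∧ ∀ t : ℝ, 0 < t → ∀ u v : Esp n → ℝ, MemVLp n p u → MemVLp n p v →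
      luxNorm n p (convR n (etaKer n t m) (fun x ↦ u x * v x)) ≤
        C * t ^ (-(n : ℝ) * smoothingExponent pm pp t) * luxNorm n p u * luxNorm n p v := by
  obtain ⟨A, hA, unit⟩ := exists_vMod_convR_etaKer_mul_div_le_one hm hmp hpp hdecay hpm
  refine ⟨A, hA, fun t ht u v ↦ luxNorm_le_mul_mul_of_vMod_le_one
    (T := fun u v ↦ convR n (etaKer n t m) fun x ↦ u x * v x) (by positivity)
    (convR_div_mul_div _) (unit t ht)⟩

end MainEstimate

/-- Lemma 3.11, estimate (3.11) of the paper: for `p ∈ P^log` with `2 ≤ p⁻ = p_∞` and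
`p⁺ < ∞`, `‖η_{t,m} * (uv)‖_{L^{p(·)}} ≤ C t^{-nφ(t)} ‖u‖_{L^{p(·)}} ‖v‖_{L^{p(·)}}`,
where `φ(t) = 2/p⁻ - 1/p⁺` for `0 < t ≤ 1` and `φ(t) = 1/p⁺` for `t > 1`. -/
theorem statement10 (n : ℕ) (hn : 1 ≤ n) (m : ℝ) (hm : (n : ℝ) < m)
    (pexp : Esp n → ℝ) (hpmeas : Measurable pexp) (hp1 : ∀ x, 1 ≤ pexp x)
    (pm pp : ℝ) (hpm : pm = essInf pexp volume) (hpp : pp = essSup pexp volume)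
    (hbdd : IsBoundedUnder (· ≤ ·) (ae (volume : Measure (Esp n))) pexp)
    (hlog : IsLogHolder n pexp (1 / pm))
    (h2pm : 2 ≤ pm) :
    ∃ C : ℝ, 0 < C ∧ ∀ t : ℝ, 0 < t → ∀ u v : Esp n → ℝ,
      MemVLp n pexp u → MemVLp n pexp v →
      luxNorm n pexp (convR n (etaKer n t m) (fun x => u x * v x)) ≤
        C * t ^ (-(n : ℝ) * (if t ≤ 1 then 2 / pm - 1 / pp else 1 / pp)) *
          luxNorm n pexp u * luxNorm n pexp v := by
  obtain ⟨c, -, -, hdecay⟩ := hlog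
  exact statement10_general hm (hpm ▸ ae_essInf_le ⟨1, eventually_map.2 (.of_forall hp1)⟩)
    (hpp ▸ ae_le_essSup hbdd) (.of_forall hdecay) h2pm
end
end
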